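/- For every integer l ≥ 2, the set X decomposes into exactly l classes under the equivalence relation F ~ F' ⟺ F' = g·F for some g ∈ K: the quotient of X by this relation is finite of cardinality l. -/

import Mathlib

open Module Submodule

noncomputable section

/-- `stdVec n m` is the `m`-th standard basis vector of `ℂ^n` (1-indexed); `0` out of range. -/
def stdVec (n m : ℕ) : Fin n → ℂ :=
  if h : 1 ≤ m ∧ m ≤ n then Pi.single (⟨m - 1, by omega⟩ : Fin n) 1 else 0

/-- `stdSub n k` is the subspace `U_k = span(e_1, …, e_k)` of `ℂ^n`. -/
def stdSub (n k : ℕ) : Submodule ℂ (Fin n → ℂ) :=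
  span ℂ (stdVec n '' Set.Icc 1 k)

/-- The action of an invertible linear map of `ℂ^n` on a chain of subspaces. -/
def actFlag (n : ℕ) (g : (Fin n → ℂ) ≃ₗ[ℂ] (Fin n → ℂ))
    (V : ℕ → Submodule ℂ (Fin n → ℂ)) (k : ℕ) : Submodule ℂ (Fin n → ℂ) :=
  Submodule.map g.toLinearMap (V k)

/-- The orbit of the chain `V` under a set `B` of invertible linear maps. -/
def orbitOf (n : ℕ) (B : Set ((Fin n → ℂ) ≃ₗ[ℂ] (Fin n → ℂ)))
    (V : ℕ → Submodule ℂ (Fin n → ℂ)) : Set (ℕ → Submodule ℂ (Fin n → ℂ)) :=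
  {V' | ∃ b ∈ B, actFlag n b V = V'}

/-- The symmetric bilinear form `β(x,y) = ∑_{k=1}^n x_k y_{n+1-k}` on `ℂ^n`. -/
def betaF (n : ℕ) (x y : Fin n → ℂ) : ℂ := ∑ k : Fin n, x k * y k.rev

/-- `SO(n,ℂ)` for the form `β`. -/
def SOgrp (n : ℕ) : Set ((Fin n → ℂ) ≃ₗ[ℂ] (Fin n → ℂ)) :=
  {g | LinearMap.det g.toLinearMap = 1 ∧ ∀ x y, betaF n (g x) (g y) = betaF n x y}

/-- A maximal isotropic flag `V 1 ⊂ ⋯ ⊂ V l` in `ℂ^n` (values pinned outside `1..l`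
so that two flags are equal iff they agree in degrees `1, …, l`). -/
def IsIsoFlag (n l : ℕ) (V : ℕ → Submodule ℂ (Fin n → ℂ)) : Prop :=
  (∀ i, i ≤ l → finrank ℂ ↥(V i) = i) ∧ (∀ i, V i ≤ V (i + 1)) ∧ (∀ i, l ≤ i → V i = V l) ∧
    (∀ u ∈ V l, ∀ w ∈ V l, betaF n u w = 0)

/-- The isotropic flag `(v 1 ⊂ ⋯ ⊂ v l)` spanned by `v 1, …, v l`. -/
def isoFlagOf (n l : ℕ) (v : ℕ → Fin n → ℂ) (k : ℕ) : Submodule ℂ (Fin n → ℂ) :=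
  span ℂ (v '' Set.Icc 1 (min k l))

/-- `K = {g ∈ SO(2l) : g (e_l - e_{-l}) = e_l - e_{-l}}` (here `e_{-l} = e_{l+1}`),
a copy of `SO(2l-1)`. -/
def Keven (l : ℕ) : Set ((Fin (2 * l) → ℂ) ≃ₗ[ℂ] (Fin (2 * l) → ℂ)) :=
  {g | g ∈ SOgrp (2 * l) ∧
       g (stdVec (2 * l) l - stdVec (2 * l) (l + 1)) =
         stdVec (2 * l) l - stdVec (2 * l) (l + 1)}

/-- `V'` lies in the `K`-orbit of `V`. -/
def InKEvenOrbit (l : ℕ) (V V' : ℕ → Submodule ℂ (Fin (2 * l) → ℂ)) : Prop :=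
  ∃ g ∈ Keven l, actFlag (2 * l) g V = V'

/-- Membership in `X`: maximal isotropic flags of `ℂ^{2l}` with
`dim (V_l ∩ U_l) ≡ l (mod 2)`. -/
def InXEven (l : ℕ) (V : ℕ → Submodule ℂ (Fin (2 * l) → ℂ)) : Prop :=
  IsIsoFlag (2 * l) l V ∧ finrank ℂ ↥(V l ⊓ stdSub (2 * l) l) % 2 = l % 2

/-- The set of `K`-orbits on `X`. -/
def XOrbitSpace (l : ℕ) : Type :=
  Quot fun F F' : {V : ℕ → Submodule ℂ (Fin (2 * l) → ℂ) // InXEven l V} =>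
    InKEvenOrbit l F.1 F'.1

/-!
Since `u = e_l - e_{-l}` is anisotropic, a Lagrangian subspace is never contained in the hyperplane
`u^⊥`, so every maximal isotropic flag has a last member inside `u^⊥`; its index, one of
`0, …, l - 1`, is constant on orbits. If two flags have the same index `i`, each is spanned by half
of a hyperbolic basis in which `u` is a combination of the `i`-th dual pair, with the same
coefficients for both flags. Matching these bases gives an isometry that fixes `u` and carries one
flag to the other. Its determinant is determined by the flags: an isometry preserving a Lagrangian
has determinant `1`, and a reflection can be used to raise the dimension of the intersection of two
Lagrangians by one, so an isometry from `V` to `W` has determinant `(-1)^(dim V - dim (V ∩ W))`.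
The parity condition defining the family of flags makes this `1`. Finally, all `l` indices occur for
flags ending in `U_l`.
-/

section Flags

variable {K E : Type*} [DivisionRing K] [AddCommGroup E] [Module K E]

variable (K) in
/-- The standard chain of a finite family of vectors: `initialSpan K v k` is the span of its first
`k` members, and the span of all of them once `k ≥ l`. -/
def initialSpan {l : ℕ} (v : Fin l → E) (k : ℕ) : Submodule K E :=
  span K (v '' {j | (j : ℕ) < k})

lemma initialSpan_mono {l : ℕ} (v : Fin l → E) : Monotone (initialSpan K v) := fun _ _ hkm =>
  span_mono (Set.image_mono fun _ hj => lt_of_lt_of_le hj hkm)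

lemma initialSpan_zero {l : ℕ} (v : Fin l → E) : initialSpan K v 0 = ⊥ := by
  simp [initialSpan]

lemma initialSpan_of_le {l k : ℕ} (v : Fin l → E) (hk : l ≤ k) :
    initialSpan K v k = span K (Set.range v) := by
  have hall : {j : Fin l | (j : ℕ) < k} = Set.univ :=
    Set.eq_univ_of_forall fun j => j.isLt.trans_le hk
  rw [initialSpan, hall, Set.image_univ]

lemma initialSpan_succ {l k : ℕ} (v : Fin l → E) (hk : k < l) :
    initialSpan K v (k + 1) = initialSpan K v k ⊔ span K {v ⟨k, hk⟩} := by
  have hset : {j : Fin l | (j : ℕ) < k + 1} = insert ⟨k, hk⟩ {j : Fin l | (j : ℕ) < k} := by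
    ext j
    simp only [Set.mem_ofPred_eq, Set.mem_insert_iff, Fin.ext_iff]
    omega
  rw [initialSpan, hset, Set.image_insert_eq, span_insert, sup_comm, initialSpan]

lemma mem_initialSpan {l k : ℕ} (v : Fin l → E) {j : Fin l} (hj : (j : ℕ) < k) :
    v j ∈ initialSpan K v k :=
  subset_span (Set.mem_image_of_mem v hj)

lemma map_initialSpan {F : Type*} [AddCommGroup F] [Module K F] {l : ℕ} (g : E →ₗ[K] F)
    (v : Fin l → E) (k : ℕ) : (initialSpan K v k).map g = initialSpan K (g ∘ v) k := by
  rw [initialSpan, map_span, ← Set.image_comp, initialSpan]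

lemma finrank_initialSpan {l k : ℕ} {v : Fin l → E} (hv : LinearIndependent K v) (hk : k ≤ l) :
    finrank K (initialSpan K v k) = k := by
  have hset : v '' {j | (j : ℕ) < k} = Set.range (v ∘ Fin.castLE hk) := by
    rw [Set.range_comp, Fin.range_castLE]
  rw [initialSpan, hset, finrank_span_eq_card (hv.comp _ (Fin.castLE_injective hk)),
    Fintype.card_fin]

lemma eq_initialSpan [FiniteDimensional K E] {l : ℕ} {V : ℕ → Submodule K E}
    (hdim : ∀ k ≤ l, finrank K (V k) = k) (hV : Monotone V) {v : Fin l → E}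
    (hmem : ∀ j : Fin l, v j ∈ V (j + 1)) (hnotMem : ∀ j : Fin l, v j ∉ V j) :
    ∀ k ≤ l, V k = initialSpan K v k := by
  intro k
  induction k with
  | zero => exact fun h0 => (finrank_eq_zero.mp (hdim 0 h0)).trans (initialSpan_zero v).symm
  | succ k ih =>
    intro hk
    rw [initialSpan_succ v hk, ← ih (by omega)]
    refine (eq_of_le_of_finrank_eq (sup_le (hV k.le_succ) ?_) ?_).symm
    · exact (span_singleton_le_iff_mem _ _).mpr (hmem ⟨k, hk⟩)
    · rw [finrank_sup_span_singleton (hnotMem ⟨k, hk⟩), hdim k (by omega), hdim _ hk]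

lemma linearIndependent_of_finrank_initialSpan {l : ℕ} {v : Fin l → E}
    (hv : finrank K (initialSpan K v l) = l) : LinearIndependent K v := by
  rw [linearIndependent_iff_card_eq_finrank_span, Set.finrank, ← initialSpan_of_le v le_rfl, hv,
    Fintype.card_fin]

lemma exists_mem_notMem_apply_eq_ite {l : ℕ} {V : ℕ → Submodule K E}
    (hlt : ∀ k < l, ¬ V (k + 1) ≤ V k) (hV : Monotone V) {f : E →ₗ[K] K} {i : Fin l}
    (hi : V i ≤ LinearMap.ker f) (hi' : ¬ V (i + 1) ≤ LinearMap.ker f) (j : Fin l) :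
    ∃ y ∈ V (j + 1), y ∉ V j ∧ f y = if j = i then 1 else 0 := by
  obtain ⟨x₀, hx₀, hfx₀⟩ := Set.not_subset.mp hi'
  obtain ⟨x, hx, hfx⟩ : ∃ x ∈ V (i + 1), f x = 1 :=
    ⟨(f x₀)⁻¹ • x₀, smul_mem _ _ hx₀, by
      rw [map_smul, smul_eq_mul, inv_mul_cancel₀ (by exact hfx₀)]⟩
  obtain ⟨y, hy, hyj⟩ := Set.not_subset.mp (hlt j j.isLt)
  rcases lt_trichotomy j i with hji | rfl | hij
  · have hfy : f y = 0 := hi (hV (by simpa using hji) hy)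
    exact ⟨y, hy, hyj, by rw [if_neg hji.ne, hfy]⟩
  · have hxj : x ∉ V j := fun h => one_ne_zero (hfx.symm.trans (hi h))
    exact ⟨x, hx, hxj, by rw [if_pos rfl, hfx]⟩
  · have hxj : f y • x ∈ V j := smul_mem _ _ (hV (by simpa using hij) hx)
    refine ⟨y - f y • x, sub_mem hy (hV (Nat.le_succ _) hxj), fun h => hyj ?_, ?_⟩
    · exact (sub_mem_iff_left _ hxj).mp h
    · rw [if_neg hij.ne', map_sub, map_smul, hfx, smul_eq_mul, mul_one, sub_self]

lemma exists_adapted_family [FiniteDimensional K E] {l : ℕ} {V : ℕ → Submodule K E}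
    (hdim : ∀ k ≤ l, finrank K (V k) = k) (hV : Monotone V) {f : E →ₗ[K] K} {i : Fin l}
    (hi : V i ≤ LinearMap.ker f) (hi' : ¬ V (i + 1) ≤ LinearMap.ker f) :
    ∃ v : Fin l → E, LinearIndependent K v ∧ (∀ k ≤ l, V k = initialSpan K v k) ∧
      ∀ j, f (v j) = if j = i then 1 else 0 := by
  have hlt : ∀ k < l, ¬ V (k + 1) ≤ V k := fun k hk hle => by
    have := finrank_mono hle
    rw [hdim _ hk, hdim _ hk.le] at this
    omega
  choose v hmem hnotMem hf using exists_mem_notMem_apply_eq_ite hlt hV hi hi'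
  have hspan := eq_initialSpan hdim hV hmem hnotMem
  refine ⟨v, linearIndependent_of_finrank_initialSpan ?_, hspan, hf⟩
  rw [← hspan l le_rfl, hdim l le_rfl]

end Flags

section Functional

variable {K E : Type*} [Field K] [AddCommGroup E] [Module K E] [FiniteDimensional K E]

lemma exists_basis_apply_eq_ite {f : Dual K E} (hf : f ≠ 0) {l : ℕ} (hE : finrank K E = l)
    (i : Fin l) : ∃ b : Basis (Fin l) K E, ∀ j, f (b j) = if j = i then 1 else 0 := by
  obtain ⟨n, rfl⟩ : ∃ n, l = n + 1 := Nat.exists_eq_succ_of_ne_zero (Fin.pos i).ne'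
  obtain ⟨y, hy⟩ := LinearMap.surjective hf 1
  have hker : finrank K (LinearMap.ker f) = n := by
    have := Dual.finrank_ker_add_one_of_ne_zero hf
    omega
  let c := Basis.mkFinCons y (finBasisOfFinrankEq K _ hker)
    (fun a x hx hax => by simpa [hy, LinearMap.mem_ker.mp hx] using congrArg f hax)
    (fun z => ⟨-f z, by simp [hy]⟩)
  have hc : ∀ j, f (c j) = if j = 0 then 1 else 0 := by
    intro j
    simp only [c, Basis.coe_mkFinCons]
    cases j using Fin.cases with
    | zero => simp [hy]
    | succ j => simp
  refine ⟨c.reindex (Equiv.swap 0 i), fun j => ?_⟩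
  simp [hc, Equiv.swap_apply_eq_iff]

lemma exists_linearIndependent_span_eq_apply_eq_ite {U : Submodule K E} {f : Dual K E}
    (hf : ¬ U ≤ LinearMap.ker f) {l : ℕ} (hU : finrank K U = l) (i : Fin l) :
    ∃ v : Fin l → E, LinearIndependent K v ∧ span K (Set.range v) = U ∧
      ∀ j, f (v j) = if j = i then 1 else 0 := by
  have hfU : f ∘ₗ U.subtype ≠ 0 := by
    rwa [Ne, ← LinearMap.range_le_ker_iff, range_subtype]
  obtain ⟨b, hb⟩ := exists_basis_apply_eq_ite hfU hU i
  refine ⟨U.subtype ∘ b, b.linearIndependent.map' _ U.ker_subtype, ?_, hb⟩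
  rw [Set.range_comp, span_image, b.span_eq, map_subtype_top]

end Functional

section ExitIndex

variable {R M : Type*} [Semiring R] [AddCommMonoid M] [Module R M]
  {V : ℕ → Submodule R M} {H : Submodule R M}

/-- The index of the last member of the increasing chain `V` that is contained in `H`. For a flag
and the hyperplane `H` orthogonal to `u`, this is the invariant separating the orbits. It is `0`
when `V` never leaves `H`. -/
def exitIndex (V : ℕ → Submodule R M) (H : Submodule R M) : ℕ :=
  sInf {k | ¬ V (k + 1) ≤ H}

lemma exitIndex_eq {k : ℕ} (hV : Monotone V) (hk : V k ≤ H) (hk' : ¬ V (k + 1) ≤ H) :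
    exitIndex V H = k :=
  le_antisymm (Nat.sInf_le hk') <| le_csInf ⟨k, hk'⟩ fun _ hm =>
    not_lt.mp fun hmk => hm ((hV hmk).trans hk)

lemma exitIndex_spec {l : ℕ} (hV : Monotone V) (h0 : V 0 ≤ H) (hl : ¬ V l ≤ H) :
    exitIndex V H < l ∧ V (exitIndex V H) ≤ H ∧ ¬ V (exitIndex V H + 1) ≤ H := by
  obtain ⟨k, hkl, hk, hk'⟩ : ∃ k < l, V k ≤ H ∧ ¬ V (k + 1) ≤ H := by
    by_contra! hstay
    have hle : ∀ k ≤ l, V k ≤ H := by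
      intro k
      induction k with
      | zero => exact fun _ => h0
      | succ k ih => exact fun hk => hstay k hk (ih (by omega))
    exact hl (hle l le_rfl)
  rw [exitIndex_eq hV hk hk']
  exact ⟨hkl, hk, hk'⟩

lemma exitIndex_map {g : M →ₗ[R] M} (hg : H.comap g = H) :
    exitIndex (fun k => (V k).map g) H = exitIndex V H := by
  simp only [exitIndex, map_le_iff_le_comap, hg]

end ExitIndex

section Reflection

variable {R M : Type*} [CommRing R] [AddCommGroup M] [Module R M] {f : Dual R M} {a : M}

lemma isOrthogonal_reflection {B : LinearMap.BilinForm R M} (hs : B.IsSymm) {c : R}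
    (hc : B a = c • f) (ha : f a = 2) : B.IsOrthogonal (Module.reflection ha) := fun x y => by
  have hBa : ∀ z, B a z = c * f z := fun z => by rw [hc, LinearMap.smul_apply, smul_eq_mul]
  simp only [Module.reflection_apply, map_sub, map_smul, LinearMap.sub_apply, LinearMap.smul_apply,
    smul_eq_mul, hs.eq x a, hBa, ha]
  ring

lemma det_reflection [Module.Free R M] [Module.Finite R M] (ha : f a = 2) :
    LinearMap.det (Module.reflection ha).toLinearMap = -1 := by
  have htrans : (Module.reflection ha).toLinearMap = LinearMap.transvection (-f) a := by
    ext x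
    simp [Module.reflection_apply, LinearMap.transvection.apply, sub_eq_add_neg]
  rw [htrans, LinearMap.transvection.det, LinearMap.neg_apply, ha]
  ring

end Reflection

section Lagrangian

variable {K E : Type*} [Field K] [AddCommGroup E] [Module K E] {B : LinearMap.BilinForm K E}
  {U V : Submodule K E}

/-- A subspace that is its own orthogonal complement. For a nondegenerate form these are the
isotropic subspaces of half the dimension. -/
def IsLagrangian (B : LinearMap.BilinForm K E) (U : Submodule K E) : Prop :=
  B.orthogonal U = U

namespace IsLagrangian

lemma mem_iff (hU : IsLagrangian B U) {y : E} : y ∈ U ↔ ∀ x ∈ U, B x y = 0 := by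
  rw [← LinearMap.BilinForm.mem_orthogonal_iff, hU]

lemma apply_eq_zero (hU : IsLagrangian B U) {x y : E} (hx : x ∈ U) (hy : y ∈ U) : B x y = 0 :=
  hU.mem_iff.mp hy x hx

lemma map (hU : IsLagrangian B U) {g : E ≃ₗ[K] E} (hg : B.IsOrthogonal g) :
    IsLagrangian B (U.map g.toLinearMap) := by
  refine Submodule.ext (g.surjective.forall.mpr fun y => ?_)
  have hmem : g y ∈ U.map g.toLinearMap ↔ y ∈ U := g.injective.mem_set_image
  rw [hmem, hU.mem_iff, LinearMap.BilinForm.mem_orthogonal_iff]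
  exact Set.forall_mem_image.trans (forall₂_congr fun x _ => by simp [hg x y])

lemma inf_map_reflection (hU : IsLagrangian B U) (hV : IsLagrangian B V) {u v : E}
    (hu : u ∈ U) (hv : v ∈ V) (hvu : B v u = 1) (ha : (-B (u - v)) (u - v) = 2) :
    V ⊓ U.map (Module.reflection ha).toLinearMap = V ⊓ U ⊔ span K {v} := by
  have hr : ∀ x ∈ U, Module.reflection ha x = x - B v x • u + B v x • v := fun x hx => by
    have hax : (-B (u - v)) x = B v x := by simp [hU.apply_eq_zero hu hx]
    rw [Module.reflection_apply, hax]
    module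
  refine le_antisymm ?_ (sup_le (fun x hx => ⟨hx.1, x, hx.2, ?_⟩) ?_)
  · rintro _ ⟨hxV, x, hx, rfl⟩
    change Module.reflection ha x ∈ V at hxV
    change Module.reflection ha x ∈ V ⊓ U ⊔ span K {v}
    rw [hr x hx] at hxV ⊢
    have hxV' := (V.add_mem_iff_left (V.smul_mem (B v x) hv)).mp hxV
    exact add_mem_sup ⟨hxV', U.sub_mem hx (U.smul_mem _ hu)⟩
      (smul_mem _ _ (mem_span_singleton_self v))
  · exact (hr x hx.2).trans (by simp [hV.apply_eq_zero hv hx.1])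
  · refine (span_singleton_le_iff_mem _ _).mpr ⟨hv, u, hu, (hr u hu).trans ?_⟩
    simp [hvu]

variable [FiniteDimensional K E]

lemma of_two_mul_finrank_eq (hn : B.Nondegenerate) (hU : ∀ x ∈ U, ∀ y ∈ U, B x y = 0)
    (hdim : 2 * finrank K U = finrank K E) : IsLagrangian B U := by
  have hle : U ≤ B.orthogonal U := fun y hy x hx => hU x hx y hy
  refine (eq_of_le_of_finrank_eq hle ?_).symm
  rw [LinearMap.BilinForm.finrank_orthogonal hn]
  omega

lemma two_mul_finrank (hU : IsLagrangian B U) (hn : B.Nondegenerate) :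
    2 * finrank K U = finrank K E := by
  have horth := LinearMap.BilinForm.finrank_orthogonal hn U
  have hle := U.finrank_le
  rw [hU] at horth
  omega

lemma exists_quotientEquivDual (hU : IsLagrangian B U) (hs : B.IsSymm) (hn : B.Nondegenerate) :
    ∃ φ : (E ⧸ U) ≃ₗ[K] Dual K U, ∀ (x : E) (y : U), φ (Submodule.Quotient.mk x) y = B x y := by
  let ψ : E →ₗ[K] Dual K U := U.subtype.dualMap ∘ₗ B
  have hker : U = LinearMap.ker ψ := by
    ext x
    rw [hU.mem_iff, LinearMap.mem_ker, LinearMap.ext_iff, Subtype.forall]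
    exact forall₂_congr fun y _ => by rw [hs.eq y x]; rfl
  have hsurj : Function.Surjective ψ := fun f => by
    obtain ⟨F, rfl⟩ := LinearMap.exists_extend f
    refine ⟨(B.toDual hn).symm F, LinearMap.ext fun y => ?_⟩
    exact LinearMap.BilinForm.apply_toDual_symm_apply F y
  exact ⟨(quotEquivOfEq _ _ hker).trans (ψ.quotKerEquivOfSurjective hsurj), fun _ _ => rfl⟩

/- An isometry acts on `E ⧸ U` as the inverse transpose of its action on `U`. -/
lemma det_eq_one (hU : IsLagrangian B U) (hs : B.IsSymm) (hn : B.Nondegenerate)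
    {g : E →ₗ[K] E} (hg : B.IsOrthogonal g) (hgU : U ≤ U.comap g) : LinearMap.det g = 1 := by
  obtain ⟨φ, hφ⟩ := hU.exists_quotientEquivDual hs hn
  have hcomp : (g.restrict hgU).dualMap ∘ₗ (φ ∘ₗ U.mapQ U g hgU ∘ₗ φ.symm) = LinearMap.id := by
    refine LinearMap.ext (φ.surjective.forall.mpr fun q => ?_)
    obtain ⟨x, rfl⟩ := U.mkQ_surjective q
    ext y
    simp [hφ, hg x y]
  rw [LinearMap.det_eq_det_mul_det U g hgU, ← LinearMap.det_dualMap (g.restrict hgU),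
    ← LinearMap.det_conj (U.mapQ U g hgU) φ, ← LinearMap.det_comp, hcomp, LinearMap.det_id]

lemma exists_reflection (hU : IsLagrangian B U) (hV : IsLagrangian B V)
    (hs : B.IsSymm) (hUV : ¬ U ≤ V) :
    ∃ r : E ≃ₗ[K] E, B.IsOrthogonal r ∧ LinearMap.det r.toLinearMap = -1 ∧
      finrank K ↥(V ⊓ U.map r.toLinearMap) = finrank K ↥(V ⊓ U) + 1 := by
  obtain ⟨u, hu, huV⟩ := Set.not_subset.mp hUV
  obtain ⟨v₀, hv₀, hne⟩ : ∃ v₀ ∈ V, B v₀ u ≠ 0 := by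
    simpa only [not_forall, exists_prop] using mt hV.mem_iff.mpr huV
  obtain ⟨v, hv, hvu⟩ : ∃ v ∈ V, B v u = 1 :=
    ⟨(B v₀ u)⁻¹ • v₀, V.smul_mem _ hv₀, by simp [hne]⟩
  have ha : (-B (u - v)) (u - v) = 2 := by
    simp only [map_sub, LinearMap.neg_apply, LinearMap.sub_apply, hU.apply_eq_zero hu hu,
      hV.apply_eq_zero hv hv, hs.eq u v, hvu]
    ring
  have hvU : v ∉ V ⊓ U := fun h => one_ne_zero (hvu.symm.trans (hU.apply_eq_zero h.2 hu))
  refine ⟨Module.reflection ha,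
    isOrthogonal_reflection hs (c := -1) (by module) ha, det_reflection ha, ?_⟩
  rw [hU.inf_map_reflection hV hu hv hvu ha, finrank_sup_span_singleton hvU]

lemma exists_isOrthogonal_map_eq (hV : IsLagrangian B V) (hs : B.IsSymm)
    (hn : B.Nondegenerate) (hU : IsLagrangian B U) {d : ℕ}
    (hd : finrank K ↥(V ⊓ U) + d = finrank K V) :
    ∃ s : E ≃ₗ[K] E, B.IsOrthogonal s ∧ U.map s.toLinearMap = V ∧
      LinearMap.det s.toLinearMap = (-1) ^ d := by
  have hdim {U : Submodule K E} (hU : IsLagrangian B U) : finrank K V = finrank K U := by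
    have hVE := hV.two_mul_finrank hn
    have hUE := hU.two_mul_finrank hn
    omega
  induction d generalizing U with
  | zero =>
    have hVU : V ≤ U := inf_eq_left.mp (eq_of_le_of_finrank_eq inf_le_left hd)
    exact ⟨.refl K E, fun _ _ => rfl,
      (map_id U).trans (eq_of_le_of_finrank_eq hVU (hdim hU)).symm, by simp⟩
  | succ d ih =>
    have hUV : ¬ U ≤ V := fun hle => by
      rw [inf_eq_right.mpr hle, hdim hU] at hd
      omega
    obtain ⟨r, hr, hdet, hfin⟩ := hU.exists_reflection hV hs hUV
    obtain ⟨s, hsorth, hsV, hsdet⟩ := ih (hU.map hr) (by omega)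
    refine ⟨r.trans s, fun x y => (hsorth _ _).trans (hr x y), ?_, ?_⟩
    · rw [LinearEquiv.coe_trans, Submodule.map_comp, hsV]
    · rw [LinearEquiv.coe_trans, LinearMap.det_comp, hsdet, hdet, pow_succ]

lemma det_eq_neg_one_pow (hV : IsLagrangian B V) (hs : B.IsSymm)
    (hn : B.Nondegenerate) {g : E ≃ₗ[K] E} (hg : B.IsOrthogonal g)
    (hU : IsLagrangian B U) (hgU : V.map g.toLinearMap = U) {d : ℕ}
    (hd : finrank K ↥(V ⊓ U) + d = finrank K V) :
    LinearMap.det g.toLinearMap = (-1) ^ d := by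
  obtain ⟨s, hsorth, hsV, hsdet⟩ := hV.exists_isOrthogonal_map_eq hs hn hU hd
  have hmap : V.map (g.trans s).toLinearMap = V := by
    rw [LinearEquiv.coe_trans, map_comp, hgU, hsV]
  have hdet := hV.det_eq_one hs hn (g := (g.trans s).toLinearMap)
    (fun x y => (hsorth _ _).trans (hg x y)) (map_le_iff_le_comap.mp hmap.le)
  rw [LinearEquiv.coe_trans, LinearMap.det_comp, hsdet] at hdet
  calc LinearMap.det g.toLinearMap
      = (-1) ^ d * ((-1) ^ d * LinearMap.det g.toLinearMap) := by
        rw [← mul_assoc, ← mul_pow, neg_one_mul, neg_neg, one_pow, one_mul]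
    _ = (-1) ^ d := by rw [hdet, mul_one]

lemma det_eq_one_of_finrank_inf_mod_two {V' : Submodule K E}
    (hU : IsLagrangian B U) (hV : IsLagrangian B V) (hV' : IsLagrangian B V') (hs : B.IsSymm)
    (hn : B.Nondegenerate) {g : E ≃ₗ[K] E} (hg : B.IsOrthogonal g)
    (hgV : V.map g.toLinearMap = V')
    (hparity : finrank K ↥(V ⊓ U) % 2 = finrank K ↥(V' ⊓ U) % 2) :
    LinearMap.det g.toLinearMap = 1 := by
  have hVE := hV.two_mul_finrank hn
  have hVE' := hV'.two_mul_finrank hn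
  obtain ⟨d, hd⟩ := Nat.exists_eq_add_of_le (finrank_mono (inf_le_left : V ⊓ U ≤ V))
  obtain ⟨d', hd'⟩ := Nat.exists_eq_add_of_le (finrank_mono (inf_le_left : V' ⊓ U ≤ V'))
  obtain ⟨s, hsorth, hsU, hsdet⟩ := hU.exists_isOrthogonal_map_eq hs hn hV' (d := d') (by
    rw [inf_comm, ← hd']
    have := hU.two_mul_finrank hn
    omega)
  have hdet := hV.det_eq_neg_one_pow hs hn (g := g.trans s)
    (fun x y => (hsorth _ _).trans (hg x y)) hU
    (by rw [LinearEquiv.coe_trans, map_comp, hgV, hsU]) hd.symm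
  rw [LinearEquiv.coe_trans, LinearMap.det_comp, hsdet,
    neg_one_pow_congr (n := d) (by rw [Nat.even_iff, Nat.even_iff]; omega)] at hdet
  exact mul_left_cancel₀ (pow_ne_zero d (neg_ne_zero.mpr one_ne_zero)) (hdet.trans (mul_one _).symm)

end IsLagrangian

end Lagrangian

section Hyperbolic

variable {K E ι : Type*} [Field K] [AddCommGroup E] [Module K E] [DecidableEq ι]
  {B : LinearMap.BilinForm K E} {v w v' w' : ι → E}

/-- A pair of dual families of vectors, each spanning an isotropic subspace. In dimension
`2 * card ι` it is a basis in which a symmetric form `B` is split. -/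
structure IsHyperbolicFamily (B : LinearMap.BilinForm K E) (v w : ι → E) : Prop where
  left_isotropic : ∀ j k, B (v j) (v k) = 0
  pairing : ∀ j k, B (v j) (w k) = if j = k then 1 else 0
  right_isotropic : ∀ j k, B (w j) (w k) = 0

lemma IsHyperbolicFamily.symm (h : IsHyperbolicFamily B v w) (hs : B.IsSymm) :
    IsHyperbolicFamily B w v where
  left_isotropic := h.right_isotropic
  pairing j k := by simp only [hs.eq (w j), h.pairing, eq_comm]
  right_isotropic := h.left_isotropic

lemma IsHyperbolicFamily.linearIndependent (h : IsHyperbolicFamily B v w) (hs : B.IsSymm) :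
    LinearIndependent K (Sum.elim v w) := by
  refine LinearIndependent.of_pairwise_dual_eq_zero_one _ (Sum.elim (B ∘ w) (B ∘ v)) ?_ ?_
  · rintro (j | j) (k | k) hjk <;>
      simp_all [h.pairing, (h.symm hs).pairing, h.left_isotropic, h.right_isotropic]
  · rintro (j | j) <;> simp [h.pairing, (h.symm hs).pairing]

lemma exists_isHyperbolicFamily_of_pairing [Finite ι] [NeZero (2 : K)] (hs : B.IsSymm)
    (hv : ∀ j k, B (v j) (v k) = 0) (hvw : ∀ j k, B (v j) (w k) = if j = k then 1 else 0) :
    ∃ w', IsHyperbolicFamily B v w' ∧ ∀ j, (∀ k, B (w j) (w k) = 0) → w' j = w j := by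
  have := Fintype.ofFinite ι
  let p (k : ι) : E := ∑ m, (B (w k) (w m) / 2) • v m
  have hvp : ∀ j k, B (v j) (p k) = 0 := fun j k => by simp [p, hv]
  have hpp : ∀ j k, B (p j) (p k) = 0 := fun j k => by simp [p, hv]
  have hwp : ∀ j k, B (w j) (p k) = B (w j) (w k) / 2 := fun j k => by
    simp [p, hs.eq (w j) (v _), hvw, hs.eq (w k)]
  refine ⟨fun k => w k - p k, ⟨hv, fun j k => ?_, fun j k => ?_⟩, fun j hj => ?_⟩
  · rw [map_sub, hvw, hvp, sub_zero]
  · simp only [map_sub, LinearMap.sub_apply, hpp, hwp, hs.eq (p j), hs.eq (w k)]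
    field_simp
    ring
  · simp [p, hj]

variable [FiniteDimensional K E]

lemma IsHyperbolicFamily.exists_isOrthogonal [Fintype ι] (hs : B.IsSymm)
    (h : IsHyperbolicFamily B v w) (h' : IsHyperbolicFamily B v' w')
    (hE : finrank K E = 2 * Fintype.card ι) :
    ∃ g : E ≃ₗ[K] E, B.IsOrthogonal g ∧ (∀ j, g (v j) = v' j) ∧ ∀ j, g (w j) = w' j := by
  have hcard : Fintype.card (ι ⊕ ι) = finrank K E := by rw [Fintype.card_sum, hE, two_mul]
  let b := basisOfLinearIndependentOfCardEqFinrank' _ (h.linearIndependent hs) hcard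
  let b' := basisOfLinearIndependentOfCardEqFinrank' _ (h'.linearIndependent hs) hcard
  let g := b.equiv b' (Equiv.refl _)
  have hg : ∀ s, g (Sum.elim v w s) = Sum.elim v' w' s := fun s => by
    simpa [b, b'] using b.equiv_apply s b' (.refl _)
  have hB : B.comp g.toLinearMap g.toLinearMap = B := by
    refine LinearMap.BilinForm.ext_basis b fun s t => ?_
    simp only [b, LinearMap.BilinForm.comp_apply, LinearEquiv.coe_coe,
      coe_basisOfLinearIndependentOfCardEqFinrank', hg]
    rcases s with j | j <;> rcases t with k | k <;>
      simp [h.pairing, h'.pairing, (h.symm hs).pairing, (h'.symm hs).pairing, h.left_isotropic,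
        h.right_isotropic, h'.left_isotropic, h'.right_isotropic]
  exact ⟨g, fun x y => LinearMap.congr_fun₂ hB x y, fun j => hg (.inl j), fun j => hg (.inr j)⟩

lemma exists_dual_family (hs : B.IsSymm) (hn : B.Nondegenerate) (hv : LinearIndependent K v) :
    ∃ w : ι → E, ∀ j k, B (v j) (w k) = if j = k then 1 else 0 := by
  choose F hF using fun k => LinearMap.exists_extend ((Basis.span hv).coord k)
  refine ⟨fun k => (B.toDual hn).symm (F k), fun j k => ?_⟩
  have hj : v j = (span K (Set.range v)).subtype (Basis.span hv j) :=
    congrArg Subtype.val (Basis.span_apply hv j).symm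
  rw [hs.eq, LinearMap.BilinForm.apply_toDual_symm_apply, hj, ← LinearMap.comp_apply, hF,
    Basis.coord_apply, Basis.repr_self, Finsupp.single_apply]

lemma exists_dual_family_eq (hs : B.IsSymm) (hn : B.Nondegenerate) (hv : LinearIndependent K v)
    (hvv : ∀ j k, B (v j) (v k) = 0) {i : ι} {x : E}
    (hx : ∀ j, B (v j) x = if j = i then 1 else 0) (hxx : B x x = 0) :
    ∃ w : ι → E, (∀ j k, B (v j) (w k) = if j = k then 1 else 0) ∧ w i = x ∧
      ∀ k, B x (w k) = 0 := by
  obtain ⟨w, hw⟩ := exists_dual_family hs hn hv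
  have hxv : B x (v i) = 1 := by rw [hs.eq, hx, if_pos rfl]
  refine ⟨Function.update (fun k => w k - B x (w k) • v i) i x, fun j k => ?_,
    Function.update_self .., fun k => ?_⟩
  · rcases eq_or_ne k i with rfl | hk
    · rw [Function.update_self, hx]
    · rw [Function.update_of_ne hk, map_sub, map_smul, hw, hvv, smul_zero, sub_zero]
  · rcases eq_or_ne k i with rfl | hk
    · rw [Function.update_self, hxx]
    · rw [Function.update_of_ne hk, map_sub, map_smul, hxv, smul_eq_mul, mul_one, sub_self]

/- Since `u` pairs with the `v j` like a dual vector of `v i`, a multiple of `v i` corrects it to an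
isotropic one. -/
lemma exists_isHyperbolicFamily_eq_add_smul [Finite ι] [NeZero (2 : K)] (hs : B.IsSymm)
    (hn : B.Nondegenerate) (hv : LinearIndependent K v) (hvv : ∀ j k, B (v j) (v k) = 0)
    {i : ι} {u : E} (hu : ∀ j, B u (v j) = if j = i then 1 else 0) :
    ∃ w : ι → E, IsHyperbolicFamily B v w ∧ u = w i + (B u u / 2) • v i := by
  obtain ⟨w, hw, hwi, hiso⟩ := exists_dual_family_eq hs hn hv hvv (i := i)
    (x := u - (B u u / 2) • v i) (fun j => by simp [hvv, hs.eq (v j), hu]) (by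
      simp only [map_sub, map_smul, LinearMap.sub_apply, LinearMap.smul_apply, smul_eq_mul, hvv,
        hs.eq (v i) u, hu, if_pos]
      field_simp
      ring)
  obtain ⟨w', hw', hw'i⟩ := exists_isHyperbolicFamily_of_pairing hs hvv hw
  exact ⟨w', hw', by rw [hw'i i (by rwa [hwi]), hwi, sub_add_cancel]⟩

end Hyperbolic

section MaxIsotropicFlag

variable {K E : Type*} [Field K] [AddCommGroup E] [Module K E] {B : LinearMap.BilinForm K E}
  {l : ℕ} {V V' : ℕ → Submodule K E}

/-- A complete flag `V 1 ⊂ ⋯ ⊂ V l` in an isotropic subspace `V l` of dimension `l`, encoded as in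
`IsIsoFlag`: the sequence is constant from index `l` on. -/
def IsMaxIsotropicFlag (B : LinearMap.BilinForm K E) (l : ℕ) (V : ℕ → Submodule K E) : Prop :=
  (∀ i, i ≤ l → finrank K (V i) = i) ∧ (∀ i, V i ≤ V (i + 1)) ∧ (∀ i, l ≤ i → V i = V l) ∧
    ∀ x ∈ V l, ∀ y ∈ V l, B x y = 0

namespace IsMaxIsotropicFlag

lemma finrank_eq (hV : IsMaxIsotropicFlag B l V) {k : ℕ} (hk : k ≤ l) : finrank K (V k) = k :=
  hV.1 k hk

lemma monotone (hV : IsMaxIsotropicFlag B l V) : Monotone V :=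
  monotone_nat_of_le_succ hV.2.1

lemma eq_of_le (hV : IsMaxIsotropicFlag B l V) {k : ℕ} (hk : l ≤ k) : V k = V l :=
  hV.2.2.1 k hk

lemma apply_eq_zero (hV : IsMaxIsotropicFlag B l V) : ∀ x ∈ V l, ∀ y ∈ V l, B x y = 0 :=
  hV.2.2.2

lemma of_linearIndependent {v : Fin l → E} (hv : LinearIndependent K v)
    (hiso : ∀ x ∈ span K (Set.range v), ∀ y ∈ span K (Set.range v), B x y = 0) :
    IsMaxIsotropicFlag B l (initialSpan K v) :=
  ⟨fun _ => finrank_initialSpan hv, fun k => initialSpan_mono v k.le_succ,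
    fun _ hk => by rw [initialSpan_of_le v hk, initialSpan_of_le v le_rfl],
    by rwa [initialSpan_of_le v le_rfl]⟩

variable [FiniteDimensional K E]

lemma isLagrangian (hV : IsMaxIsotropicFlag B l V) (hn : B.Nondegenerate)
    (hE : finrank K E = 2 * l) : IsLagrangian B (V l) :=
  .of_two_mul_finrank_eq hn hV.apply_eq_zero (by rw [hV.finrank_eq le_rfl, hE])

variable [NeZero (2 : K)] {u : E} {i : Fin l}

lemma exists_isHyperbolicFamily (hV : IsMaxIsotropicFlag B l V) (hs : B.IsSymm)
    (hn : B.Nondegenerate) (hi : V i ≤ LinearMap.ker (B u))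
    (hi' : ¬ V (i + 1) ≤ LinearMap.ker (B u)) :
    ∃ v w : Fin l → E, IsHyperbolicFamily B v w ∧ (∀ k ≤ l, V k = initialSpan K v k) ∧
      u = w i + (B u u / 2) • v i := by
  obtain ⟨v, hv, hspan, huv⟩ := exists_adapted_family (fun _ => hV.finrank_eq) hV.monotone hi hi'
  have hmem : ∀ j, v j ∈ V l := fun j => by
    rw [hspan l le_rfl]
    exact mem_initialSpan v j.isLt
  obtain ⟨w, hw, hu⟩ := exists_isHyperbolicFamily_eq_add_smul hs hn hv
    (fun j k => hV.apply_eq_zero _ (hmem j) _ (hmem k)) huv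
  exact ⟨v, w, hw, hspan, hu⟩

lemma exists_isOrthogonal_map_eq (hV : IsMaxIsotropicFlag B l V) (hV' : IsMaxIsotropicFlag B l V')
    (hs : B.IsSymm) (hn : B.Nondegenerate) (hE : finrank K E = 2 * l)
    (hi : V i ≤ LinearMap.ker (B u)) (hi' : ¬ V (i + 1) ≤ LinearMap.ker (B u))
    (hj : V' i ≤ LinearMap.ker (B u)) (hj' : ¬ V' (i + 1) ≤ LinearMap.ker (B u)) :
    ∃ g : E ≃ₗ[K] E, B.IsOrthogonal g ∧ g u = u ∧ ∀ k, (V k).map g.toLinearMap = V' k := by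
  obtain ⟨v, w, hvw, hspan, hu⟩ := hV.exists_isHyperbolicFamily hs hn hi hi'
  obtain ⟨v', w', hvw', hspan', hu'⟩ := hV'.exists_isHyperbolicFamily hs hn hj hj'
  obtain ⟨g, hg, hgv, hgw⟩ := hvw.exists_isOrthogonal hs hvw' (by rw [hE, Fintype.card_fin])
  have hmap : ∀ k ≤ l, (V k).map g.toLinearMap = V' k := fun k hk => by
    rw [hspan k hk, hspan' k hk, map_initialSpan]
    exact congrArg (initialSpan K · k) (funext hgv)
  refine ⟨g, hg, ?_, fun k => ?_⟩
  · calc g u = g (w i) + (B u u / 2) • g (v i) := by rw [← map_smul, ← map_add, ← hu]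
      _ = u := by rw [hgw, hgv, ← hu']
  · rcases le_total k l with hk | hk
    · exact hmap k hk
    · rw [hV.eq_of_le hk, hV'.eq_of_le hk, hmap l le_rfl]

end IsMaxIsotropicFlag

end MaxIsotropicFlag

section Orbits

variable {K E : Type*} [Field K] [AddCommGroup E] [Module K E] {B : LinearMap.BilinForm K E}
  {l : ℕ} {U : Submodule K E} {V V' : ℕ → Submodule K E} {u : E}

/-- Membership in the family of maximal isotropic flags cut out by a reference Lagrangian `U` of
dimension `l`: the one containing the flags that end in `U` itself. -/
def IsFlagInFamily (B : LinearMap.BilinForm K E) (l : ℕ) (U : Submodule K E)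
    (V : ℕ → Submodule K E) : Prop :=
  IsMaxIsotropicFlag B l V ∧ finrank K ↥(V l ⊓ U) % 2 = l % 2

/-- The stabilizer of the vector `u` in the special orthogonal group of `B`. -/
def specialStabilizer (B : LinearMap.BilinForm K E) (u : E) : Set (E ≃ₗ[K] E) :=
  {g | (LinearMap.det g.toLinearMap = 1 ∧ B.IsOrthogonal g) ∧ g u = u}

/-- The set of orbits of `specialStabilizer B u` on the family of maximal isotropic flags
determined by `U`. -/
def FlagOrbitSpace (B : LinearMap.BilinForm K E) (l : ℕ) (U : Submodule K E) (u : E) : Type _ :=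
  Quot fun F F' : {V : ℕ → Submodule K E // IsFlagInFamily B l U V} =>
    ∃ g ∈ specialStabilizer B u, (fun k => (F.1 k).map g.toLinearMap) = F'.1

lemma exitIndex_ker_map {g : E ≃ₗ[K] E} (hg : g ∈ specialStabilizer B u) :
    exitIndex (fun k => (V k).map g.toLinearMap) (LinearMap.ker (B u)) =
      exitIndex V (LinearMap.ker (B u)) := by
  refine exitIndex_map (Submodule.ext fun x => ?_)
  have hgx : B u (g x) = B u x := by simpa only [hg.2] using hg.1.2 u x
  simp [hgx]

variable [FiniteDimensional K E]

lemma IsMaxIsotropicFlag.exitIndex_ker_spec (hV : IsMaxIsotropicFlag B l V) (hs : B.IsSymm)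
    (hn : B.Nondegenerate) (hE : finrank K E = 2 * l) (hu : B u u ≠ 0) :
    exitIndex V (LinearMap.ker (B u)) < l ∧
      V (exitIndex V (LinearMap.ker (B u))) ≤ LinearMap.ker (B u) ∧
      ¬ V (exitIndex V (LinearMap.ker (B u)) + 1) ≤ LinearMap.ker (B u) := by
  have hzero : V 0 = ⊥ := finrank_eq_zero.mp (hV.finrank_eq l.zero_le)
  refine exitIndex_spec hV.monotone (hzero.trans_le bot_le) fun hle => ?_
  have hLag := hV.isLagrangian hn hE
  have huV : u ∈ V l := hLag.mem_iff.mpr fun x hx => (hs.eq x u).trans (hle hx)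
  exact hu (hLag.apply_eq_zero huV huV)

lemma exists_isFlagInFamily_exitIndex_eq (hU : IsLagrangian B U) (hUl : finrank K U = l)
    (hs : B.IsSymm) (hu : B u u ≠ 0) (i : Fin l) :
    ∃ V, IsFlagInFamily B l U V ∧ exitIndex V (LinearMap.ker (B u)) = i := by
  have hUker : ¬ U ≤ LinearMap.ker (B u) := fun hle => by
    have huU : u ∈ U := hU.mem_iff.mpr fun x hx => (hs.eq x u).trans (hle hx)
    exact hu (hU.apply_eq_zero huU huU)
  obtain ⟨v, hv, hspan, hite⟩ := exists_linearIndependent_span_eq_apply_eq_ite hUker hUl i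
  have hVl : initialSpan K v l = U := (initialSpan_of_le v le_rfl).trans hspan
  refine ⟨initialSpan K v, ⟨.of_linearIndependent hv ?_, by rw [hVl, inf_idem, hUl]⟩,
    exitIndex_eq (initialSpan_mono v) ?_ fun hle => ?_⟩
  · rw [hspan]
    exact fun x hx y hy => hU.apply_eq_zero hx hy
  · rw [initialSpan, span_le, Set.image_subset_iff]
    exact fun j hj => (hite j).trans (if_neg (Fin.ne_of_lt hj))
  · have hvi : B u (v i) = 0 := hle (mem_initialSpan v (Nat.lt_succ_self i))
    exact one_ne_zero (((hite i).trans (if_pos rfl)).symm.trans hvi)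

variable [NeZero (2 : K)]

lemma IsFlagInFamily.exists_mem_specialStabilizer (hs : B.IsSymm) (hn : B.Nondegenerate)
    (hU : IsLagrangian B U) (hE : finrank K E = 2 * l) (hu : B u u ≠ 0)
    (hV : IsFlagInFamily B l U V) (hV' : IsFlagInFamily B l U V')
    (heq : exitIndex V (LinearMap.ker (B u)) = exitIndex V' (LinearMap.ker (B u))) :
    ∃ g ∈ specialStabilizer B u, (fun k => (V k).map g.toLinearMap) = V' := by
  obtain ⟨hlt, hi, hi'⟩ := hV.1.exitIndex_ker_spec hs hn hE hu
  obtain ⟨-, hj, hj'⟩ := hV'.1.exitIndex_ker_spec hs hn hE hu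
  rw [← heq] at hj hj'
  obtain ⟨g, hg, hgu, hgV⟩ :=
    hV.1.exists_isOrthogonal_map_eq (i := ⟨_, hlt⟩) hV'.1 hs hn hE hi hi' hj hj'
  have hdet := hU.det_eq_one_of_finrank_inf_mod_two (hV.1.isLagrangian hn hE)
    (hV'.1.isLagrangian hn hE) hs hn hg (hgV l) (hV.2.trans hV'.2.symm)
  exact ⟨g, ⟨⟨hdet, hg⟩, hgu⟩, funext hgV⟩

lemma FlagOrbitSpace.exists_bijective_fin (hs : B.IsSymm) (hn : B.Nondegenerate)
    (hU : IsLagrangian B U) (hUl : finrank K U = l) (hu : B u u ≠ 0) :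
    ∃ f : FlagOrbitSpace B l U u → Fin l, Function.Bijective f := by
  have hE : finrank K E = 2 * l := by rw [← hU.two_mul_finrank hn, hUl]
  refine ⟨Quot.lift (fun F => ⟨exitIndex F.1 (LinearMap.ker (B u)),
    (F.2.1.exitIndex_ker_spec hs hn hE hu).1⟩) ?_, ?_, fun i => ?_⟩
  · rintro F F' ⟨g, hg, hgF⟩
    exact Fin.ext ((exitIndex_ker_map hg).symm.trans (congrArg (exitIndex · _) hgF))
  · rintro ⟨F⟩ ⟨F'⟩ heq
    exact Quot.sound
      (F.2.exists_mem_specialStabilizer hs hn hU hE hu F'.2 (congrArg Fin.val heq))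
  · obtain ⟨V, hV, hVi⟩ := exists_isFlagInFamily_exitIndex_eq hU hUl hs hu i
    exact ⟨Quot.mk _ ⟨V, hV⟩, Fin.ext hVi⟩

end Orbits

theorem stmt_4_general {K E : Type*} [Field K] [NeZero (2 : K)] [AddCommGroup E] [Module K E]
    [FiniteDimensional K E] {B : LinearMap.BilinForm K E} (hs : B.IsSymm) (hn : B.Nondegenerate)
    {l : ℕ} {U : Submodule K E} (hU : IsLagrangian B U) (hUl : finrank K U = l)
    {u : E} (hu : B u u ≠ 0) :
    Finite (FlagOrbitSpace B l U u) ∧ Nat.card (FlagOrbitSpace B l U u) = l := by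
  obtain ⟨f, hf⟩ := FlagOrbitSpace.exists_bijective_fin hs hn hU hUl hu
  exact ⟨.of_injective f hf.injective, (Nat.card_eq_of_bijective f hf).trans (Nat.card_fin l)⟩

section BetaForm

/-- `betaF n` as a bilinear form. -/
def betaForm (n : ℕ) : LinearMap.BilinForm ℂ (Fin n → ℂ) :=
  LinearMap.mk₂ ℂ (betaF n)
    (fun x x' y => by simp only [betaF, Pi.add_apply, add_mul, Finset.sum_add_distrib])
    (fun c x y => by simp only [betaF, Pi.smul_apply, smul_eq_mul, Finset.mul_sum, mul_assoc])
    (fun x y y' => by simp only [betaF, Pi.add_apply, mul_add, Finset.sum_add_distrib])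
    (fun c x y => by
      simp only [betaF, Pi.smul_apply, smul_eq_mul, Finset.mul_sum, mul_left_comm])

lemma betaForm_apply_single {n : ℕ} (x : Fin n → ℂ) (k : Fin n) :
    betaForm n x (Pi.single k 1) = x k.rev := by
  change betaF n x (Pi.single k 1) = x k.rev
  simp [betaF, Pi.single_apply, Fin.rev_eq_iff]

lemma isSymm_betaForm (n : ℕ) : (betaForm n).IsSymm where
  eq x y := by
    change betaF n x y = betaF n y x
    rw [betaF, ← Equiv.sum_comp Fin.revPerm]
    simp [betaF, mul_comm]

lemma nondegenerate_betaForm (n : ℕ) : (betaForm n).Nondegenerate := by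
  refine (isSymm_betaForm n).isRefl.nondegenerate_iff_separatingLeft.mpr fun x hx =>
    funext fun k => ?_
  simpa [betaForm_apply_single] using hx (Pi.single k.rev 1)

lemma stdVec_succ {n : ℕ} (k : Fin n) : stdVec n (k + 1) = Pi.single k 1 := by
  simp [stdVec, Nat.succ_le_of_lt k.isLt]

lemma betaForm_stdVec {n j k : ℕ} (hj : j ∈ Set.Icc 1 n) (hk : k ∈ Set.Icc 1 n) :
    betaForm n (stdVec n j) (stdVec n k) = if j + k = n + 1 then 1 else 0 := by
  have h : ∀ m ∈ Set.Icc 1 n, ∃ i : Fin n, m = i + 1 := fun m hm =>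
    ⟨⟨m - 1, Nat.sub_one_lt_of_le hm.1 hm.2⟩, (Nat.sub_add_cancel hm.1).symm⟩
  obtain ⟨j, rfl⟩ := h j hj
  obtain ⟨k, rfl⟩ := h k hk
  rw [stdVec_succ, stdVec_succ, betaForm_apply_single, Pi.single_apply]
  congr 1
  simp only [Fin.ext_iff, Fin.val_rev, eq_iff_iff]
  omega

lemma stdSub_eq_initialSpan {n k : ℕ} (hk : k ≤ n) :
    stdSub n k = initialSpan ℂ (Pi.basisFun ℂ (Fin n)) k := by
  rw [stdSub, initialSpan]
  congr 1
  ext x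
  constructor
  · rintro ⟨m, ⟨hm, hmk⟩, rfl⟩
    refine ⟨⟨m - 1, by omega⟩, Nat.sub_one_lt_of_le hm hmk, ?_⟩
    simp [stdVec, hm, hmk.trans hk]
  · rintro ⟨j, hj, rfl⟩
    exact ⟨j + 1, ⟨by omega, hj⟩, by simp [stdVec_succ]⟩

lemma finrank_stdSub {n k : ℕ} (hk : k ≤ n) : finrank ℂ (stdSub n k) = k := by
  rw [stdSub_eq_initialSpan hk, finrank_initialSpan (Pi.basisFun ℂ (Fin n)).linearIndependent hk]

lemma isLagrangian_stdSub (l : ℕ) : IsLagrangian (betaForm (2 * l)) (stdSub (2 * l) l) := by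
  have hgen : ∀ x ∈ stdVec (2 * l) '' Set.Icc 1 l, ∀ y ∈ stdVec (2 * l) '' Set.Icc 1 l,
      betaForm (2 * l) x y ∈ (⊥ : Submodule ℂ ℂ) := by
    rintro _ ⟨j, ⟨hj, hjl⟩, rfl⟩ _ ⟨k, ⟨hk, hkl⟩, rfl⟩
    rw [betaForm_stdVec ⟨hj, by omega⟩ ⟨hk, by omega⟩, if_neg (by omega), mem_bot]
  refine .of_two_mul_finrank_eq (nondegenerate_betaForm _) (fun x hx y hy => ?_) ?_
  · exact (mem_bot ℂ).mp
      (LinearMap.BilinMap.apply_apply_mem_of_mem_span ⊥ _ _ (betaForm (2 * l)) hgen x y hx hy)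
  · rw [finrank_stdSub (by omega), finrank_fin_fun]

lemma betaForm_stdVec_sub_self {l : ℕ} (hl : 1 ≤ l) :
    betaForm (2 * l) (stdVec (2 * l) l - stdVec (2 * l) (l + 1))
      (stdVec (2 * l) l - stdVec (2 * l) (l + 1)) = -2 := by
  have h₁ : l ∈ Set.Icc 1 (2 * l) := ⟨hl, by omega⟩
  have h₂ : l + 1 ∈ Set.Icc 1 (2 * l) := ⟨by omega, by omega⟩
  simp only [map_sub, LinearMap.sub_apply, betaForm_stdVec h₁ h₁, betaForm_stdVec h₁ h₂,
    betaForm_stdVec h₂ h₁, betaForm_stdVec h₂ h₂]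
  rw [if_neg (by omega), if_pos (by omega), if_pos (by omega), if_neg (by omega)]
  norm_num

end BetaForm

/-- `X` decomposes into exactly `l` classes under the `K`-equivalence. -/
theorem stmt_4 (l : ℕ) (hl : 2 ≤ l) :
    Finite (XOrbitSpace l) ∧ Nat.card (XOrbitSpace l) = l :=
  stmt_4_general (isSymm_betaForm _) (nondegenerate_betaForm _) (isLagrangian_stdSub l)
    (finrank_stdSub (by omega)) (by rw [betaForm_stdVec_sub_self (by omega)]; norm_num)
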